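/- Suppose there exist constants C > 0 and C_u > 0 such that for every multi-index α ∈ ℕ^d one has ‖∂^α u‖_{L²(D)} ≤ C_u · (C·k)^{|α|} · |α|!. Then u is real-analytic on D, and there exists a constant c > 0 depending only on d such that for every x₀ ∈ D the Taylor series of u at x₀ has radius of convergence at least c/(C·k). -/

import Mathlib

open MeasureTheory

/-- Partial derivative of a function `ℝ^d → ℂ` in the `i`-th coordinate direction. -/
noncomputable def pderivDir (d : ℕ) (i : Fin d) (f : EuclideanSpace ℝ (Fin d) → ℂ) :
    EuclideanSpace ℝ (Fin d) → ℂ :=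
  fun x => fderiv ℝ f x (EuclideanSpace.single i 1)

/-- Iterated partial derivatives along a list of coordinate directions. -/
noncomputable def pderivList (d : ℕ) :
    List (Fin d) → (EuclideanSpace ℝ (Fin d) → ℂ) → EuclideanSpace ℝ (Fin d) → ℂ
  | [], f => f
  | i :: l, f => pderivDir d i (pderivList d l f)

/-- The iterated partial derivative `∂^α` for a multi-index `α : Fin d → ℕ`,
taken in the canonical coordinate order. -/
noncomputable def partialDerivMulti (d : ℕ) (α : Fin d → ℕ)
    (f : EuclideanSpace ℝ (Fin d) → ℂ) : EuclideanSpace ℝ (Fin d) → ℂ :=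
  pderivList d ((List.finRange d).flatMap fun i => List.replicate (α i) i) f

/-!
Expand `u` about `y` to order `d` and evaluate at `x`; averaging over `y ∈ B(x, r)` bounds `|u x|`
by the `L¹` norms over `B(x, r)` of the derivatives of `u` of order at most `d + 1`. In the integral
remainder, the weight `(1 - t) ^ d` is exactly the Jacobian of the homothety `y ↦ y + t (x - y)`, so
the remainder costs no more than `∫ ‖D ^ (d + 1) u‖`.

Applied to `D ^ n u`, and with `(n + k)! ≤ 2 ^ (n + k) n! k!`, this turns the `L²` bounds into
pointwise bounds `‖D ^ n u‖ ≤ K (2 d C k) ^ n n!` near each point, the factor `d ^ n` counting the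
sequences of `n` coordinate directions. Hence the Taylor remainder tends to zero on small balls, and
the Taylor coefficients give a radius of convergence of at least `1 / (2 d C k)`.
-/

open Module Set Filter Metric
open scoped ENNReal NNReal Topology Nat

section Analytic

variable {E F : Type*} [NormedAddCommGroup E] [NormedSpace ℝ E] [NormedAddCommGroup F]
  [NormedSpace ℝ F] {u : E → F} {x : E}

/-- The Taylor series of `u` at `x`, with the factor `1 / n!` included in the `n`-th term, unlike in
`ftaylorSeries`. -/
noncomputable def taylorSeries (u : E → F) (x : E) : FormalMultilinearSeries ℝ E F :=
  fun n => (n ! : ℝ)⁻¹ • iteratedFDeriv ℝ n u x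

theorem norm_taylorSeries_le {n : ℕ} {a : ℝ} (h : ‖iteratedFDeriv ℝ n u x‖ ≤ a * n !) :
    ‖taylorSeries u x n‖ ≤ a := by
  rw [taylorSeries, norm_smul, norm_inv, Real.norm_natCast, inv_mul_le_iff₀ (by positivity)]
  linarith

theorem inv_le_radius_of_norm_le_mul_pow {p : FormalMultilinearSeries ℝ E F} {M : ℝ} {R : ℝ≥0}
    (h : ∀ n, ‖p n‖ ≤ M * R ^ n) : (R : ℝ≥0∞)⁻¹ ≤ p.radius := by
  refine ENNReal.le_of_forall_nnreal_lt fun r hr => p.le_radius_of_bound M fun n => ?_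
  have hRr : (R * r : ℝ) ≤ 1 := by
    have : (R * r : ℝ≥0∞) ≤ 1 := by
      rw [mul_comm]
      exact ENNReal.mul_le_of_le_div (by simpa using hr.le)
    exact_mod_cast this
  have hM : 0 ≤ M := by simpa using (norm_nonneg _).trans (h 0)
  calc ‖p n‖ * (r : ℝ) ^ n ≤ M * R ^ n * r ^ n := by gcongr; exact h n
    _ = M * (R * r) ^ n := by rw [mul_assoc, mul_pow]
    _ ≤ M := mul_le_of_le_one_right hM (pow_le_one₀ (by positivity) hRr)

variable [CompleteSpace F]

theorem norm_sub_partialSum_taylorSeries_le {y : E} {n : ℕ} {a : ℝ}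
    (hu : ∀ t ∈ Icc (0 : ℝ) 1, ContDiffAt ℝ (n + 1) u (x + t • y))
    (ha : ∀ t ∈ Icc (0 : ℝ) 1, ‖iteratedFDeriv ℝ (n + 1) u (x + t • y)‖ ≤ a * (n + 1)!) :
    ‖u (x + y) - (taylorSeries u x).partialSum (n + 1) y‖ ≤ (n + 1 : ℕ) * (a * ‖y‖ ^ (n + 1)) := by
  have hremainder : ‖∫ t in (0 : ℝ)..1,
      (1 - t) ^ n • iteratedFDeriv ℝ (n + 1) u (x + t • y) fun _ => y‖ ≤
      a * (n + 1)! * ‖y‖ ^ (n + 1) * |1 - 0| := by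
    refine intervalIntegral.norm_integral_le_of_norm_le_const fun t ht => ?_
    rw [uIoc_of_le zero_le_one] at ht
    have ht' : |1 - t| ≤ 1 := abs_le.2 ⟨by linarith [ht.2], by linarith [ht.1]⟩
    rw [norm_smul, norm_pow, Real.norm_eq_abs]
    refine (mul_le_of_le_one_left (norm_nonneg _) (pow_le_one₀ (abs_nonneg _) ht')).trans ?_
    exact (ContinuousMultilinearMap.le_of_opNorm_le (ha t (Ioc_subset_Icc_self ht)) _).trans_eq
      (by simp)
  rw [map_add_eq_sum_add_integral_iteratedFDeriv hu, FormalMultilinearSeries.partialSum]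
  simp only [taylorSeries, smul_apply, add_sub_cancel_left, norm_smul,
    norm_inv, Real.norm_natCast]
  rw [inv_mul_le_iff₀ (by positivity)]
  refine hremainder.trans_eq ?_
  rw [Nat.factorial_succ, sub_zero, abs_one]
  push_cast
  ring

theorem hasFPowerSeriesOnBall_taylorSeries {ρ M : ℝ} {R : ℝ≥0} (hρ : 0 < ρ)
    (hu : ContDiffOn ℝ (⊤ : ℕ∞) u (ball x ρ))
    (hb : ∀ n, ∀ y ∈ ball x ρ, ‖iteratedFDeriv ℝ n u y‖ ≤ M * R ^ n * n !) :
    HasFPowerSeriesOnBall u (taylorSeries u x) x (min (ENNReal.ofReal ρ) (R : ℝ≥0∞)⁻¹) := by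
  have hrad : (R : ℝ≥0∞)⁻¹ ≤ (taylorSeries u x).radius := inv_le_radius_of_norm_le_mul_pow
    fun n => norm_taylorSeries_le (hb n x (mem_ball_self hρ))
  refine ⟨(min_le_right _ _).trans hrad, by simp [hρ], fun {y} hy => ?_⟩
  have hsum : Summable fun n => taylorSeries u x n fun _ => y :=
    (taylorSeries u x).summable (eball_subset_eball ((min_le_right _ _).trans hrad) hy)
  rw [mem_eball_zero_iff, lt_min_iff] at hy
  have hyρ : ‖y‖ < ρ := by
    rw [← ofReal_norm, ENNReal.ofReal_lt_ofReal_iff hρ] at hy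
    exact hy.1
  have hRy : R * ‖y‖ < 1 := by
    have : R * ‖y‖ₑ < 1 := ENNReal.mul_lt_of_lt_div' (by simpa using hy.2)
    rw [enorm_eq_nnnorm] at this
    exact_mod_cast this
  have hseg : ∀ t ∈ Icc (0 : ℝ) 1, x + t • y ∈ ball x ρ := fun t ht => by
    rw [mem_ball, dist_self_add_left, norm_smul, Real.norm_of_nonneg ht.1]
    exact (mul_le_of_le_one_left (norm_nonneg _) ht.2).trans_lt hyρ
  have hremainder (n : ℕ) : ‖u (x + y) - (taylorSeries u x).partialSum (n + 1) y‖ ≤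
      M * ((n + 1 : ℕ) * (R * ‖y‖) ^ (n + 1)) :=
    (norm_sub_partialSum_taylorSeries_le
      (fun t ht => (hu.contDiffAt (isOpen_ball.mem_nhds (hseg t ht))).of_le
        (by exact_mod_cast le_top))
      (fun t ht => hb (n + 1) _ (hseg t ht))).trans_eq (by ring)
  have hbound : Tendsto (fun n : ℕ => M * ((n + 1 : ℕ) * (R * ‖y‖) ^ (n + 1))) atTop (𝓝 0) := by
    simpa using ((tendsto_add_atTop_iff_nat 1).2
      (tendsto_self_mul_const_pow_of_lt_one (by positivity) hRy)).const_mul M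
  have hlim : Tendsto (fun n => (taylorSeries u x).partialSum n y) atTop (𝓝 (u (x + y))) := by
    rw [← tendsto_add_atTop_iff_nat 1, tendsto_iff_norm_sub_tendsto_zero]
    simp only [norm_sub_rev _ (u (x + y))]
    exact squeeze_zero (fun _ => norm_nonneg _) hremainder hbound
  rw [← tendsto_nhds_unique hsum.hasSum.tendsto_sum_nat hlim]
  exact hsum.hasSum

end Analytic

section Sobolev

theorem add_smul_sub_mem_of_starConvex {𝕜 E : Type*} [CommRing 𝕜] [PartialOrder 𝕜]
    [IsOrderedRing 𝕜] [AddCommGroup E] [Module 𝕜 E] {s : Set E} {x y : E}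
    (hs : StarConvex 𝕜 x s) (hy : y ∈ s) {t : 𝕜} (ht : t ∈ Icc 0 1) : y + t • (x - y) ∈ s := by
  convert hs.add_smul_sub_mem hy (sub_nonneg.2 ht.2) (sub_le_self 1 ht.1) using 1
  module

variable {E F : Type*} [NormedAddCommGroup E] [NormedSpace ℝ E] [NormedAddCommGroup F]
  [NormedSpace ℝ F] {u : E → F} {x : E}

theorem norm_iteratedFDeriv_iteratedFDeriv (k n : ℕ) (u : E → F) (x : E) :
    ‖iteratedFDeriv ℝ k (iteratedFDeriv ℝ n u) x‖ = ‖iteratedFDeriv ℝ (n + k) u x‖ := by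
  induction k generalizing n with
  | zero => rw [norm_iteratedFDeriv_zero, add_zero]
  | succ k ih =>
    rw [← norm_iteratedFDeriv_fderiv, fderiv_iteratedFDeriv,
      LinearIsometryEquiv.norm_iteratedFDeriv_comp_left, ih, add_assoc, add_comm 1]

theorem enorm_map_add_le_sum_add_lintegral [CompleteSpace F] {y : E} {n : ℕ}
    (hu : ∀ t ∈ Icc (0 : ℝ) 1, ContDiffAt ℝ (n + 1) u (x + t • y)) :
    ‖u (x + y)‖ₑ ≤ ∑ k ∈ Finset.range (n + 1), ‖y‖ₑ ^ k * ‖iteratedFDeriv ℝ k u x‖ₑ +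
      ‖y‖ₑ ^ (n + 1) * ∫⁻ t in Ioo (0 : ℝ) 1,
        ENNReal.ofReal (1 - t) ^ n * ‖iteratedFDeriv ℝ (n + 1) u (x + t • y)‖ₑ := by
  have henorm (k : ℕ) (z : E) : ‖iteratedFDeriv ℝ k u z fun _ => y‖ₑ ≤
      ‖y‖ₑ ^ k * ‖iteratedFDeriv ℝ k u z‖ₑ := by
    have h := (iteratedFDeriv ℝ k u z).le_opNNNorm fun _ => y
    rw [Finset.prod_const, Finset.card_univ, Fintype.card_fin, mul_comm] at h
    simp only [enorm_eq_nnnorm]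
    exact_mod_cast h
  have hinv (k : ℕ) : ‖(k ! : ℝ)⁻¹‖ₑ ≤ 1 := by
    rw [← ofReal_norm, norm_inv, Real.norm_natCast, ENNReal.ofReal_le_one]
    exact inv_le_one_of_one_le₀ (by exact_mod_cast k.factorial_pos)
  rw [map_add_eq_sum_add_integral_iteratedFDeriv hu]
  refine (enorm_add_le _ _).trans (add_le_add ?_ ?_)
  · refine (enorm_sum_le _ _).trans (Finset.sum_le_sum fun k _ => ?_)
    rw [enorm_smul]
    exact (mul_le_of_le_one_left zero_le (hinv k)).trans (henorm k x)
  · rw [enorm_smul, intervalIntegral.integral_of_le zero_le_one, integral_Ioc_eq_integral_Ioo,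
      ← lintegral_const_mul' _ _ (by finiteness)]
    refine (mul_le_of_le_one_left zero_le (hinv n)).trans ?_
    refine (enorm_integral_le_lintegral_enorm _).trans
      (setLIntegral_mono' measurableSet_Ioo fun t ht => ?_)
    rw [enorm_smul, enorm_pow, Real.enorm_of_nonneg (sub_nonneg.2 ht.2.le), mul_left_comm]
    gcongr
    exact henorm _ _

theorem enorm_le_sum_add_lintegral_of_mem_ball [CompleteSpace F] {y : E} {r : ℝ} {n : ℕ}
    (hu : ContDiffOn ℝ (n + 1) u (ball x r)) (hy : y ∈ ball x r) :
    ‖u x‖ₑ ≤ ∑ k ∈ Finset.range (n + 1), ENNReal.ofReal r ^ k * ‖iteratedFDeriv ℝ k u y‖ₑ +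
      ENNReal.ofReal r ^ (n + 1) * ∫⁻ t in Ioo (0 : ℝ) 1,
        ENNReal.ofReal (1 - t) ^ n * ‖iteratedFDeriv ℝ (n + 1) u (y + t • (x - y))‖ₑ := by
  have hstar : StarConvex ℝ x (ball x r) :=
    (convex_ball x r).starConvex (mem_ball_self (pos_of_mem_ball hy))
  have hxy : ‖x - y‖ₑ ≤ ENNReal.ofReal r := by
    rw [← ofReal_norm, ← dist_eq_norm']
    exact ENNReal.ofReal_le_ofReal hy.le
  have htaylor := enorm_map_add_le_sum_add_lintegral (u := u) (y := x - y) fun t ht =>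
    hu.contDiffAt (isOpen_ball.mem_nhds (add_smul_sub_mem_of_starConvex hstar hy ht))
  rw [add_sub_cancel] at htaylor
  refine htaylor.trans ?_
  gcongr

variable [FiniteDimensional ℝ E] [MeasurableSpace E] [BorelSpace E]
  {μ : Measure E} [μ.IsAddHaarMeasure] {s : Set E}

theorem ofReal_pow_mul_setLIntegral_comp_add_smul_sub_le {f : E → ℝ≥0∞} (hs : MeasurableSet s)
    (hxs : StarConvex ℝ x s) {t : ℝ} (ht : t ∈ Ico (0 : ℝ) 1) :
    ENNReal.ofReal (1 - t) ^ finrank ℝ E * ∫⁻ y in s, f (y + t • (x - y)) ∂μ ≤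
      ∫⁻ y in s, f y ∂μ := by
  set g : E → E := fun y => y + t • (x - y) with hg
  have ht' : 0 < 1 - t := sub_pos.2 ht.2
  have hgx (y : E) : g y = x + (1 - t) • (y - x) := by rw [hg]; module
  have hderiv (y : E) : HasFDerivAt g ((1 - t) • ContinuousLinearMap.id ℝ E) y := by
    rw [funext hgx]
    exact (((hasFDerivAt_id y).sub_const x).const_smul (1 - t)).const_add x
  have hinj : InjOn g s := fun y _ z _ h => by simpa [hgx, ht'.ne'] using h
  have hdet : ENNReal.ofReal |((1 - t) • ContinuousLinearMap.id ℝ E).det| =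
      ENNReal.ofReal (1 - t) ^ finrank ℝ E := by
    simp [ContinuousLinearMap.det, abs_of_pos ht', ENNReal.ofReal_pow ht'.le]
  calc ENNReal.ofReal (1 - t) ^ finrank ℝ E * ∫⁻ y in s, f (g y) ∂μ
      = ∫⁻ y in s, ENNReal.ofReal |((1 - t) • ContinuousLinearMap.id ℝ E).det| * f (g y) ∂μ := by
        rw [hdet, lintegral_const_mul' _ _ (by finiteness)]
    _ = ∫⁻ y in g '' s, f y ∂μ :=
        (lintegral_image_eq_lintegral_abs_det_fderiv_mul μ hs
          (fun y _ => (hderiv y).hasFDerivWithinAt) hinj f).symm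
    _ ≤ ∫⁻ y in s, f y ∂μ :=
        lintegral_mono_set (image_subset_iff.2 fun y hy =>
          add_smul_sub_mem_of_starConvex hxs hy (Ico_subset_Icc_self ht))

theorem setLIntegral_lintegral_comp_add_smul_sub_le {f : E → ℝ≥0∞} (hs : MeasurableSet s)
    (hxs : StarConvex ℝ x s) (hf : ContinuousOn f s) :
    ∫⁻ y in s, (∫⁻ t in Ioo (0 : ℝ) 1,
        ENNReal.ofReal (1 - t) ^ finrank ℝ E * f (y + t • (x - y))) ∂μ ≤
      ∫⁻ y in s, f y ∂μ := by
  have hmeas : AEMeasurable (fun z : E × ℝ =>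
      ENNReal.ofReal (1 - z.2) ^ finrank ℝ E * f (z.1 + z.2 • (x - z.1)))
      ((μ.restrict s).prod (volume.restrict (Ioo 0 1))) := by
    rw [Measure.prod_restrict]
    refine (Measurable.aemeasurable (by fun_prop)).mul
      (ContinuousOn.aemeasurable (hf.comp (by fun_prop) fun z hz => ?_)
        (hs.prod measurableSet_Ioo))
    exact add_smul_sub_mem_of_starConvex hxs hz.1 (Ioo_subset_Icc_self hz.2)
  calc ∫⁻ y in s, (∫⁻ t in Ioo (0 : ℝ) 1,
        ENNReal.ofReal (1 - t) ^ finrank ℝ E * f (y + t • (x - y))) ∂μ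
      = ∫⁻ t in Ioo (0 : ℝ) 1, (∫⁻ y in s,
        ENNReal.ofReal (1 - t) ^ finrank ℝ E * f (y + t • (x - y)) ∂μ) :=
        lintegral_lintegral_swap hmeas
    _ ≤ ∫⁻ _ in Ioo (0 : ℝ) 1, (∫⁻ y in s, f y ∂μ) := by
        refine setLIntegral_mono' measurableSet_Ioo fun t ht => ?_
        rw [lintegral_const_mul' _ _ (by finiteness)]
        exact ofReal_pow_mul_setLIntegral_comp_add_smul_sub_le hs hxs (Ioo_subset_Ico_self ht)
    _ = ∫⁻ y in s, f y ∂μ := by simp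

variable [CompleteSpace F] {r : ℝ}

theorem measure_ball_mul_enorm_le_sum_setLIntegral_iteratedFDeriv
    (hu : ContDiffOn ℝ (finrank ℝ E + 1) u (ball x r)) :
    μ (ball x r) * ‖u x‖ₑ ≤ ∑ k ∈ Finset.range (finrank ℝ E + 2),
      ENNReal.ofReal r ^ k * ∫⁻ y in ball x r, ‖iteratedFDeriv ℝ k u y‖ₑ ∂μ := by
  set d := finrank ℝ E
  have hcont {k : ℕ} (hk : k ≤ d + 1) :
      ContinuousOn (fun y => ‖iteratedFDeriv ℝ k u y‖ₑ) (ball x r) := fun y hy =>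
    ((hu.contDiffAt (isOpen_ball.mem_nhds hy)).iteratedFDeriv_right (m := 0)
      (by simpa using mod_cast hk)).continuousAt.enorm.continuousWithinAt
  have hmeas {k : ℕ} (hk : k ∈ Finset.range (d + 1)) : AEMeasurable
      (fun y => ENNReal.ofReal r ^ k * ‖iteratedFDeriv ℝ k u y‖ₑ) (μ.restrict (ball x r)) :=
    ((hcont (Finset.mem_range.1 hk).le).aemeasurable measurableSet_ball).const_mul _
  have hrk (k : ℕ) : ENNReal.ofReal r ^ k ≠ ∞ := ENNReal.pow_ne_top ENNReal.ofReal_ne_top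
  calc μ (ball x r) * ‖u x‖ₑ = ∫⁻ _ in ball x r, ‖u x‖ₑ ∂μ := by rw [setLIntegral_const, mul_comm]
    _ ≤ ∫⁻ y in ball x r, (∑ k ∈ Finset.range (d + 1),
          ENNReal.ofReal r ^ k * ‖iteratedFDeriv ℝ k u y‖ₑ + ENNReal.ofReal r ^ (d + 1) *
          ∫⁻ t in Ioo (0 : ℝ) 1, ENNReal.ofReal (1 - t) ^ d *
            ‖iteratedFDeriv ℝ (d + 1) u (y + t • (x - y))‖ₑ) ∂μ :=
      setLIntegral_mono' measurableSet_ball fun y hy =>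
        enorm_le_sum_add_lintegral_of_mem_ball hu hy
    _ = ∑ k ∈ Finset.range (d + 1),
          ENNReal.ofReal r ^ k * ∫⁻ y in ball x r, ‖iteratedFDeriv ℝ k u y‖ₑ ∂μ +
          ENNReal.ofReal r ^ (d + 1) * ∫⁻ y in ball x r, (∫⁻ t in Ioo (0 : ℝ) 1,
            ENNReal.ofReal (1 - t) ^ d *
              ‖iteratedFDeriv ℝ (d + 1) u (y + t • (x - y))‖ₑ) ∂μ := by
      rw [lintegral_add_left' (Finset.aemeasurable_fun_sum _ fun _ => hmeas),
        lintegral_finsetSum' _ fun _ => hmeas]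
      simp only [lintegral_const_mul' _ _ (hrk _)]
    _ ≤ ∑ k ∈ Finset.range (d + 2),
          ENNReal.ofReal r ^ k * ∫⁻ y in ball x r, ‖iteratedFDeriv ℝ k u y‖ₑ ∂μ := by
      rw [Finset.sum_range_succ _ (d + 1)]
      gcongr _ + _ * ?_
      exact setLIntegral_lintegral_comp_add_smul_sub_le measurableSet_ball
        (fun y hy => (convex_ball x r).starConvex (mem_ball_self (pos_of_mem_ball hy)) hy)
        (hcont le_rfl)

theorem measure_ball_mul_enorm_iteratedFDeriv_le_mul_pow {M A : ℝ≥0∞} {n : ℕ}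
    (hu : ContDiffOn ℝ (⊤ : ℕ∞) u (ball x r))
    (hb : ∀ n, ∫⁻ y in ball x r, ‖iteratedFDeriv ℝ n u y‖ₑ ∂μ ≤ M * A ^ n * n !) :
    μ (ball x r) * ‖iteratedFDeriv ℝ n u x‖ₑ ≤
      (∑ k ∈ Finset.range (finrank ℝ E + 2), ENNReal.ofReal r ^ k * (M * (2 * A) ^ k * k !)) *
        ((2 * A) ^ n * n !) := by
  have hDn : ContDiffOn ℝ (finrank ℝ E + 1) (iteratedFDeriv ℝ n u) (ball x r) := fun y hy =>
    ((hu.contDiffAt (isOpen_ball.mem_nhds hy)).iteratedFDeriv_right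
      (by exact_mod_cast le_top)).contDiffWithinAt
  refine (measure_ball_mul_enorm_le_sum_setLIntegral_iteratedFDeriv (μ := μ) hDn).trans ?_
  rw [Finset.sum_mul]
  refine Finset.sum_le_sum fun k _ => ?_
  have hfactorial : ((n + k)! : ℝ≥0∞) ≤ 2 ^ (n + k) * (n ! * k !) := by
    rw [← Nat.add_choose_mul_factorial_mul_factorial, mul_assoc]
    exact_mod_cast Nat.mul_le_mul_right _ (Nat.choose_le_two_pow _ _)
  calc ENNReal.ofReal r ^ k * ∫⁻ y in ball x r, ‖iteratedFDeriv ℝ k (iteratedFDeriv ℝ n u) y‖ₑ ∂μ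
      = ENNReal.ofReal r ^ k * ∫⁻ y in ball x r, ‖iteratedFDeriv ℝ (n + k) u y‖ₑ ∂μ := by
        simp only [← ofReal_norm, norm_iteratedFDeriv_iteratedFDeriv]
    _ ≤ ENNReal.ofReal r ^ k * (M * A ^ (n + k) * (2 ^ (n + k) * (n ! * k !))) := by
        gcongr
        exact (hb (n + k)).trans (by gcongr)
    _ = ENNReal.ofReal r ^ k * (M * (2 * A) ^ k * k !) * ((2 * A) ^ n * n !) := by ring

theorem exists_norm_iteratedFDeriv_le_of_setLIntegral_le {M A : ℝ≥0} (hr : 0 < r)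
    (hu : ContDiffOn ℝ (⊤ : ℕ∞) u (ball x (2 * r)))
    (hb : ∀ n, ∫⁻ y in ball x (2 * r), ‖iteratedFDeriv ℝ n u y‖ₑ ∂μ ≤ M * A ^ n * n !) :
    ∃ K : ℝ≥0, ∀ n, ∀ y ∈ ball x r,
      ‖iteratedFDeriv ℝ n u y‖ ≤ K * (2 * A : ℝ≥0) ^ n * n ! := by
  have hμ : μ (ball 0 r) ≠ 0 := (measure_ball_pos μ 0 hr).ne'
  obtain ⟨K, hK⟩ : ∃ K : ℝ≥0, (K : ℝ≥0∞) = (∑ k ∈ Finset.range (finrank ℝ E + 2),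
      ENNReal.ofReal r ^ k * (M * (2 * A) ^ k * k !)) / μ (ball 0 r) :=
    ⟨_, ENNReal.coe_toNNReal <|
      ENNReal.div_ne_top (ENNReal.sum_ne_top.2 fun k _ => by finiteness) hμ⟩
  refine ⟨K, fun n y hy => ?_⟩
  have hsub : ball y r ⊆ ball x (2 * r) :=
    ball_subset_ball' (by rw [two_mul]; gcongr; exact hy.le)
  have hbound := measure_ball_mul_enorm_iteratedFDeriv_le_mul_pow (n := n) (hu.mono hsub) fun n =>
    (lintegral_mono_set hsub).trans (hb n)
  rw [Measure.addHaar_ball_center, mul_comm, ← ENNReal.le_div_iff_mul_le (.inl hμ)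
    (.inl measure_ball_lt_top.ne), ENNReal.mul_div_right_comm, ← hK, enorm_eq_nnnorm,
    ← mul_assoc] at hbound
  exact_mod_cast hbound

theorem hasFPowerSeriesAt_taylorSeries_of_setLIntegral_le {M A : ℝ≥0} (hr : 0 < r)
    (hu : ContDiffOn ℝ (⊤ : ℕ∞) u (ball x r))
    (hb : ∀ n, ∫⁻ y in ball x r, ‖iteratedFDeriv ℝ n u y‖ₑ ∂μ ≤ M * A ^ n * n !) :
    HasFPowerSeriesAt u (taylorSeries u x) x ∧ (2 * A : ℝ≥0∞)⁻¹ ≤ (taylorSeries u x).radius := by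
  rw [← mul_div_cancel₀ r (two_ne_zero' ℝ)] at hu hb
  obtain ⟨K, hK⟩ := exists_norm_iteratedFDeriv_le_of_setLIntegral_le (half_pos hr) hu hb
  have hball := hu.mono (ball_subset_ball (by linarith : r / 2 ≤ 2 * (r / 2)))
  exact ⟨⟨_, hasFPowerSeriesOnBall_taylorSeries (half_pos hr) hball hK⟩, by
    simpa using inv_le_radius_of_norm_le_mul_pow fun n =>
      norm_taylorSeries_le (hK n x (mem_ball_self (half_pos hr)))⟩

end Sobolev

section Coordinates

theorem norm_le_sum_norm_apply_orthonormalBasis {𝕜 ι κ E G : Type*} [RCLike 𝕜] [Fintype ι]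
    [Fintype κ] [DecidableEq κ] [NormedAddCommGroup E] [InnerProductSpace 𝕜 E]
    [NormedAddCommGroup G] [NormedSpace 𝕜 G] (b : OrthonormalBasis ι 𝕜 E)
    (f : ContinuousMultilinearMap 𝕜 (fun _ : κ => E) G) :
    ‖f‖ ≤ ∑ v : κ → ι, ‖f fun j => b (v j)‖ := by
  refine f.opNorm_le_bound (by positivity) fun m => ?_
  calc ‖f m‖ = ‖∑ v : κ → ι, f fun j => b.repr (m j) (v j) • b (v j)‖ := by
        rw [← f.map_sum fun j i => b.repr (m j) i • b i]
        simp only [b.sum_repr]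
    _ ≤ ∑ v : κ → ι, ‖f fun j => b.repr (m j) (v j) • b (v j)‖ := norm_sum_le _ _
    _ ≤ ∑ v : κ → ι, ‖f fun j => b (v j)‖ * ∏ j, ‖m j‖ := by
        refine Finset.sum_le_sum fun v _ => ?_
        rw [f.map_smul_univ, norm_smul, norm_prod, mul_comm]
        gcongr with j
        exact (PiLp.norm_apply_le _ _).trans_eq (b.repr.norm_map _)
    _ = (∑ v : κ → ι, ‖f fun j => b (v j)‖) * ∏ j, ‖m j‖ := (Finset.sum_mul ..).symm

variable {d n : ℕ} {D : Set (EuclideanSpace ℝ (Fin d))} {u : EuclideanSpace ℝ (Fin d) → ℂ}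
  {x : EuclideanSpace ℝ (Fin d)}

theorem contDiffOn_pderivList (hD : IsOpen D) (hu : ContDiffOn ℝ (⊤ : ℕ∞) u D)
    (l : List (Fin d)) : ContDiffOn ℝ (⊤ : ℕ∞) (pderivList d l u) D := by
  induction l with
  | nil => exact hu
  | cons i l ih => exact (ih.fderiv_of_isOpen hD (by simp)).clm_apply contDiffOn_const

theorem pderivDir_comm {i j : Fin d} (hu : ContDiffAt ℝ 2 u x) :
    pderivDir d i (pderivDir d j u) x = pderivDir d j (pderivDir d i u) x := by
  have hdiff : DifferentiableAt ℝ (fderiv ℝ u) x :=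
    (hu.fderiv_right (m := 1) (by norm_num)).differentiableAt one_ne_zero
  have hsymm : IsSymmSndFDerivAt ℝ u x := hu.isSymmSndFDerivAt (by simp)
  unfold pderivDir
  rw [fderiv_clm_apply hdiff (by fun_prop), fderiv_clm_apply hdiff (by fun_prop)]
  simpa using hsymm _ _

theorem pderivList_eqOn_of_perm (hD : IsOpen D) (hu : ContDiffOn ℝ (⊤ : ℕ∞) u D)
    {l₁ l₂ : List (Fin d)} (h : l₁.Perm l₂) : EqOn (pderivList d l₁ u) (pderivList d l₂ u) D := by
  induction h with
  | nil => exact fun _ _ => rfl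
  | cons i _ ih =>
    intro x hx
    simp only [pderivList, pderivDir]
    rw [(ih.eventuallyEq_of_mem (hD.mem_nhds hx)).fderiv_eq]
  | swap i j l =>
    exact fun x hx => pderivDir_comm (((contDiffOn_pderivList hD hu l).contDiffAt
      (hD.mem_nhds hx)).of_le (by norm_cast))
  | trans _ _ ih₁ ih₂ => exact ih₁.trans ih₂

theorem iteratedFDeriv_apply_single_eq_pderivList (hD : IsOpen D)
    (hu : ContDiffOn ℝ (⊤ : ℕ∞) u D) (v : Fin n → Fin d) (hx : x ∈ D) :
    iteratedFDeriv ℝ n u x (fun j => EuclideanSpace.single (v j) 1) =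
      pderivList d (List.ofFn v) u x := by
  induction n generalizing x with
  | zero => simp [pderivList]
  | succ n ih =>
    have hdiff : DifferentiableAt ℝ (iteratedFDeriv ℝ n u) x :=
      (hu.contDiffAt (hD.mem_nhds hx)).differentiableAt_iteratedFDeriv
        (by exact_mod_cast ENat.natCast_lt_top n)
    have htail : (fun y => iteratedFDeriv ℝ n u y
        (Fin.tail fun j => EuclideanSpace.single (v j) 1)) =ᶠ[𝓝 x]
        pderivList d (List.ofFn (Fin.tail v)) u :=
      eventually_of_mem (hD.mem_nhds hx) fun y hy => ih _ hy
    rw [hdiff.iteratedFDeriv_succ_apply_left', htail.fderiv_eq, List.ofFn_succ]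
    rfl

theorem exists_iteratedFDeriv_apply_single_eqOn_partialDerivMulti (hD : IsOpen D)
    (hu : ContDiffOn ℝ (⊤ : ℕ∞) u D) (v : Fin n → Fin d) :
    ∃ α : Fin d → ℕ, ∑ i, α i = n ∧ EqOn
      (fun x => iteratedFDeriv ℝ n u x fun j => EuclideanSpace.single (v j) 1)
      (partialDerivMulti d α u) D := by
  refine ⟨fun i => (List.ofFn v).count i, ?_, fun x hx => ?_⟩
  · simpa using Multiset.sum_count_eq_card (s := Finset.univ)
      (m := (List.ofFn v : Multiset (Fin d))) (by simp)
  · refine (iteratedFDeriv_apply_single_eq_pderivList hD hu v hx).trans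
      (pderivList_eqOn_of_perm hD hu (List.perm_iff_count.2 fun i => ?_) hx)
    simp [List.count_flatMap, Function.comp_def, List.count_replicate, ← List.ofFn_eq_map,
      List.sum_ofFn]

theorem setLIntegral_enorm_iteratedFDeriv_le (hD : IsOpen D) (hu : ContDiffOn ℝ (⊤ : ℕ∞) u D)
    {p B : ℝ≥0∞} (hp : 1 ≤ p)
    (hB : ∀ α : Fin d → ℕ, ∑ i, α i = n →
      eLpNorm (partialDerivMulti d α u) p (volume.restrict D) ≤ B) :
    ∫⁻ x in D, ‖iteratedFDeriv ℝ n u x‖ₑ ≤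
      d ^ n * (B * volume D ^ (1 - 1 / p.toReal)) := by
  have hmeas (α : Fin d → ℕ) :
      AEStronglyMeasurable (partialDerivMulti d α u) (volume.restrict D) :=
    (contDiffOn_pderivList hD hu _).continuousOn.aestronglyMeasurable hD.measurableSet
  choose α hα hαu using exists_iteratedFDeriv_apply_single_eqOn_partialDerivMulti (n := n) hD hu
  have hpointwise : ∀ x ∈ D, ‖iteratedFDeriv ℝ n u x‖ₑ ≤
      ∑ v : Fin n → Fin d, ‖partialDerivMulti d (α v) u x‖ₑ := fun x hx => by
    have h := ENNReal.ofReal_le_ofReal (norm_le_sum_norm_apply_orthonormalBasis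
      (EuclideanSpace.basisFun (Fin d) ℝ) (iteratedFDeriv ℝ n u x))
    rw [ENNReal.ofReal_sum_of_nonneg fun _ _ => norm_nonneg _] at h
    simpa only [EuclideanSpace.basisFun_apply, ofReal_norm, ← hαu _ hx] using h
  have hL1 (v : Fin n → Fin d) : ∫⁻ x in D, ‖partialDerivMulti d (α v) u x‖ₑ ≤
      B * volume D ^ (1 - 1 / p.toReal) := by
    rw [← eLpNorm_one_eq_lintegral_enorm]
    refine (eLpNorm_le_eLpNorm_mul_rpow_measure_univ hp (hmeas _)).trans ?_
    rw [Measure.restrict_apply_univ, ENNReal.toReal_one, div_one]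
    gcongr
    exact hB _ (hα v)
  calc ∫⁻ x in D, ‖iteratedFDeriv ℝ n u x‖ₑ
      ≤ ∫⁻ x in D, ∑ v : Fin n → Fin d, ‖partialDerivMulti d (α v) u x‖ₑ :=
        setLIntegral_mono' hD.measurableSet hpointwise
    _ = ∑ v : Fin n → Fin d, ∫⁻ x in D, ‖partialDerivMulti d (α v) u x‖ₑ :=
        lintegral_finsetSum' _ fun v _ => (hmeas _).enorm
    _ ≤ ∑ _v : Fin n → Fin d, B * volume D ^ (1 - 1 / p.toReal) :=
        Finset.sum_le_sum fun v _ => hL1 v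
    _ = d ^ n * (B * volume D ^ (1 - 1 / p.toReal)) := by simp

end Coordinates

theorem analytic_of_kpow_factorial_derivative_bounds_general {d : ℕ}
    {D : Set (EuclideanSpace ℝ (Fin d))} (hD : IsOpen D) {u : EuclideanSpace ℝ (Fin d) → ℂ}
    (hu : ContDiffOn ℝ (⊤ : ℕ∞) u D) {p : ℝ≥0∞} (hp : 1 ≤ p) {M A : ℝ≥0}
    (hb : ∀ α : Fin d → ℕ, eLpNorm (partialDerivMulti d α u) p (volume.restrict D) ≤
      M * A ^ (∑ i, α i) * (∑ i, α i)!) {x : EuclideanSpace ℝ (Fin d)} (hx : x ∈ D) :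
    HasFPowerSeriesAt u (taylorSeries u x) x ∧
      (2 * (d * A) : ℝ≥0∞)⁻¹ ≤ (taylorSeries u x).radius := by
  obtain ⟨r, hr, hrD⟩ := isOpen_iff.1 hD x hx
  have hexp : 0 ≤ 1 - 1 / p.toReal := by
    rw [sub_nonneg, one_div]
    rcases eq_or_ne p ∞ with rfl | hp'
    · simp
    · exact inv_le_one_of_one_le₀ (by simpa using ENNReal.toReal_mono hp' hp)
  have hV : volume (ball x r) ^ (1 - 1 / p.toReal) ≠ ∞ :=
    ENNReal.rpow_ne_top_of_nonneg hexp measure_ball_lt_top.ne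
  lift volume (ball x r) ^ (1 - 1 / p.toReal) to ℝ≥0 using hV with V hVeq
  have hL1 (n : ℕ) : ∫⁻ y in ball x r, ‖iteratedFDeriv ℝ n u y‖ₑ ≤
      (M * V : ℝ≥0) * (d * A : ℝ≥0) ^ n * n ! := by
    refine (setLIntegral_enorm_iteratedFDeriv_le (B := M * A ^ n * n !) isOpen_ball
      (hu.mono hrD) hp fun α hα => ?_).trans_eq ?_
    · exact (eLpNorm_mono_measure _ (Measure.restrict_mono_set _ hrD)).trans
        (hα ▸ hb α)
    · rw [← hVeq]
      push_cast
      ring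
  simpa using hasFPowerSeriesAt_taylorSeries_of_setLIntegral_le hr (hu.mono hrD) hL1

/-- If `‖∂^α u‖_{L²(D)} ≤ C_u (C k)^{|α|} |α|!` for every multi-index `α`,
then `u` is real-analytic on the bounded open set `D`, and there is a constant `c > 0`
depending only on `d` such that the Taylor series of `u` at every point of `D` has
radius of convergence at least `c / (C k)`. -/
theorem analytic_of_kpow_factorial_derivative_bounds
    (d : ℕ) (hd : 1 ≤ d) :
    ∃ c : ℝ, 0 < c ∧
      ∀ (D : Set (EuclideanSpace ℝ (Fin d))), IsOpen D → Bornology.IsBounded D →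
      ∀ (k : ℝ), 1 ≤ k →
      ∀ (u : EuclideanSpace ℝ (Fin d) → ℂ), ContDiffOn ℝ (⊤ : ℕ∞) u D →
      ∀ (C Cu : ℝ), 0 < C → 0 < Cu →
      (∀ α : Fin d → ℕ,
        eLpNorm (partialDerivMulti d α u) 2 (volume.restrict D)
          ≤ ENNReal.ofReal
              (Cu * (C * k) ^ (∑ i, α i) * (Nat.factorial (∑ i, α i) : ℝ))) →
      (∀ x ∈ D, AnalyticAt ℝ u x) ∧
        ∀ x₀ ∈ D, ∃ p : FormalMultilinearSeries ℝ (EuclideanSpace ℝ (Fin d)) ℂ,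
          HasFPowerSeriesAt u p x₀ ∧ ENNReal.ofReal (c / (C * k)) ≤ p.radius := by
  have hd' : (0 : ℝ) < d := by exact_mod_cast hd
  refine ⟨1 / (2 * d), by positivity, fun D hD _ k hk u hu C Cu hC hCu hb => ?_⟩
  have hA : 0 < C * k := by positivity
  have hb' (α : Fin d → ℕ) : eLpNorm (partialDerivMulti d α u) 2 (volume.restrict D) ≤
      Cu.toNNReal * (C * k).toNNReal ^ (∑ i, α i) * (∑ i, α i)! := by
    refine (hb α).trans_eq ?_
    rw [ENNReal.ofReal_mul (by positivity), ENNReal.ofReal_mul hCu.le, ENNReal.ofReal_pow hA.le,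
      ENNReal.ofReal_natCast]
    rfl
  have hmain {x} (hx : x ∈ D) := analytic_of_kpow_factorial_derivative_bounds_general hD hu
    one_le_two hb' hx
  refine ⟨fun x hx => (hmain hx).1.analyticAt, fun x hx => ⟨_, (hmain hx).1, ?_⟩⟩
  refine le_of_eq_of_le ?_ (hmain hx).2
  rw [div_div, one_div, mul_assoc, ENNReal.ofReal_inv_of_pos (by positivity),
    ENNReal.ofReal_mul zero_le_two, ENNReal.ofReal_mul hd'.le, ENNReal.ofReal_natCast,
    ENNReal.ofReal_ofNat]
  rfl
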